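/- Let M ≥ 2 be an integer, f : ℤ → ℝ a function with f(n+M) = f(n) for all n ∈ ℤ, ν ∈ {0,1}, and a ≥ 0, b ≥ 1 integers. Assume G_f^{(ν)}(k) ≠ 0 for some integer k ≥ 1 and let k_ν be the least such k. Define ξ(n) as in the context, and for n ≥ 1 set g(n) := ∑_{ℓ=0}^{n−1} (−1)^ℓ · C(n−1, ℓ) · ξ(n−ℓ). Then g(n) / [ (−1)^ν · (M/(2π k_ν))^(2n+ν+1) · G_f^{(ν)}(k_ν) · 2^(2n+ν) · n! · n^(ν−1/2) · e^(−b k_ν² π²/(2M²)) / (b^n · √(πM)) ] → 1 as n → ∞. -/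

import Mathlib

/-- The Fourier coefficient `G_f^{(ν)}(k)` of a function `f : ℤ → ℝ` of period `M`. -/
noncomputable def Gf (M : ℕ) (f : ℤ → ℝ) (ν : ℕ) (k : ℕ) : ℝ :=
  if ν = 0 then
    (2 / Real.sqrt M) * ∑ m ∈ Finset.range M, f m * Real.sin (2 * Real.pi * m * k / M)
  else
    (2 / Real.sqrt M) * ∑ m ∈ Finset.range M, f m * Real.cos (2 * Real.pi * m * k / M)

/-- `C_n = (−1)^(n+1) (M^(2n+ν)/(2n+ν+1)) ∑_{m=1}^M f(m) B_{2n+ν+1}(m/M)`. -/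
noncomputable def Cf (M : ℕ) (f : ℤ → ℝ) (ν : ℕ) (n : ℕ) : ℝ :=
  (-1) ^ (n + 1) * ((M : ℝ) ^ (2 * n + ν) / (2 * n + ν + 1)) *
    ∑ m ∈ Finset.Icc 1 M,
      f m * (((Polynomial.bernoulli (2 * n + ν + 1)).eval ((m : ℚ) / (M : ℚ)) : ℚ) : ℝ)

/-- `D_n = b^(−n) ∑_{k=0}^n C(n,k) a^(n−k) C_k`. -/
noncomputable def Df (M : ℕ) (f : ℤ → ℝ) (ν a b : ℕ) (n : ℕ) : ℝ :=
  ((b : ℝ) ^ n)⁻¹ *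
    ∑ k ∈ Finset.range (n + 1), (n.choose k : ℝ) * (a : ℝ) ^ (n - k) * Cf M f ν k

/-- The unsigned Stirling number of the first kind `s(n,j)`: the coefficient of `X^j`
in `X (X+1) (X+2) ⋯ (X+n−1)`. -/
noncomputable def stirling1 (n j : ℕ) : ℝ :=
  (∏ i ∈ Finset.range n, (Polynomial.X + Polynomial.C (i : ℝ))).coeff j

/-- `ξ(0) = D_0` and `ξ(n) = (1/n!) ∑_{m=0}^{n−1} s(n, n−m) D_{n−m}` for `n ≥ 1`. -/
noncomputable def xif (M : ℕ) (f : ℤ → ℝ) (ν a b : ℕ) : ℕ → ℝ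
  | 0 => Df M f ν a b 0
  | n + 1 => (1 / ((n + 1).factorial : ℝ)) *
      ∑ m ∈ Finset.range (n + 1), stirling1 (n + 1) (n + 1 - m) * Df M f ν a b (n + 1 - m)


open Filter Topology

theorem aux_desc_lower (N j : ℕ) (h : j ≤ N) :
    (N : ℝ) ^ j ≤ Real.exp j * (N.descFactorial j : ℝ) := by
  have h1 : N ^ j * j.factorial ≤ N.descFactorial j * j ^ j := by
    rw [← Nat.descFactorial_self, Nat.descFactorial_eq_prod_range, Nat.descFactorial_eq_prod_range,
      ← Finset.card_range j, ← Finset.prod_const, ← Finset.prod_const, Finset.card_range,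
      ← Finset.prod_mul_distrib, ← Finset.prod_mul_distrib]
    refine Finset.prod_le_prod' fun i hi => ?_
    have hi' := Finset.mem_range.1 hi
    zify [hi'.le, (hi'.le.trans h)]
    have : (j : ℤ) ≤ N := by exact_mod_cast h
    nlinarith
  have h2 := Real.pow_div_factorial_le_exp (x := (j : ℝ)) (by positivity) j
  have h3 : (N : ℝ) ^ j * j.factorial ≤ N.descFactorial j * (j : ℝ) ^ j := by exact_mod_cast h1
  have h4 : (0 : ℝ) < j.factorial := by positivity
  rw [div_le_iff₀ h4] at h2
  have h5 : (0 : ℝ) ≤ N.descFactorial j := by positivity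
  nlinarith [mul_le_mul_of_nonneg_left h2 h5]

theorem aux_F_eq (ν n m : ℕ) (h : m ≤ n) :
    ((2 * (n - m) + ν).factorial : ℝ) / ((2 * n + ν).factorial : ℝ)
      = 1 / ((2 * n + ν).descFactorial (2 * m) : ℝ) := by
  have := Nat.factorial_mul_descFactorial (n := 2 * n + ν) (k := 2 * m) (by omega)
  rw [show 2 * n + ν - 2 * m = 2 * (n - m) + ν by omega] at this
  have h1 : (0 : ℝ) < (2 * n + ν).factorial := by positivity
  have h2 : (0 : ℝ) < ((2 * n + ν).descFactorial (2 * m) : ℝ) := by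
    exact_mod_cast Nat.descFactorial_pos.2 (by omega)
  rw [div_eq_div_iff h1.ne' h2.ne', one_mul]
  exact_mod_cast this

theorem aux_F_bound (ν n m : ℕ) (h : m ≤ n) :
    (n : ℝ) ^ (2 * m) * (((2 * (n - m) + ν).factorial : ℝ) / ((2 * n + ν).factorial : ℝ))
      ≤ (Real.exp 2) ^ m := by
  rw [aux_F_eq ν n m h]
  have h2 : (0 : ℝ) < ((2 * n + ν).descFactorial (2 * m) : ℝ) := by
    exact_mod_cast Nat.descFactorial_pos.2 (by omega)
  rw [mul_one_div, div_le_iff₀ h2]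
  have h3 := aux_desc_lower (2 * n + ν) (2 * m) (by omega)
  have h4 : Real.exp ((2 * m : ℕ) : ℝ) = Real.exp 2 ^ m := by
    rw [← Real.exp_nat_mul]; congr 1; push_cast; ring
  rw [h4] at h3
  refine le_trans ?_ h3
  gcongr
  push_cast
  have : (0 : ℝ) ≤ n := by positivity
  have : (0 : ℝ) ≤ ν := by positivity
  linarith

theorem aux_F_lim (ν m : ℕ) :
    Tendsto (fun n : ℕ => (n : ℝ) ^ (2 * m) *
      (((2 * (n - m) + ν).factorial : ℝ) / ((2 * n + ν).factorial : ℝ))) atTop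
      (𝓝 ((1 / 4) ^ m)) := by
  have h1 := (isEquivalent_descFactorial (2 * m))
  have hz : ∀ᶠ (x : ℕ) in atTop, (x : ℝ) ^ (2 * m) ≠ 0 :=
      eventually_atTop.mpr ⟨1, fun n hn ↦ pow_ne_zero _ (ne_of_gt (mod_cast hn))⟩
  rw [Asymptotics.isEquivalent_iff_tendsto_one hz] at h1
  have hk : Tendsto (fun n : ℕ => 2 * n + ν) atTop atTop :=
    tendsto_atTop_mono (fun n => by simp only [id]; omega) tendsto_id
  have h2 := (h1.comp hk).inv₀ one_ne_zero
  have h3 : Tendsto (fun n : ℕ => ((n : ℝ) / ((2 * n + ν : ℕ) : ℝ)) ^ (2 * m)) atTop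
      (𝓝 ((1 / 2) ^ (2 * m))) := by
    refine Tendsto.pow ?_ _
    have := tendsto_natCast_div_add_atTop ((ν : ℝ) / 2)
    have := this.mul_const (1 / 2 : ℝ)
    rw [one_mul] at this
    refine this.congr fun n => ?_
    push_cast
    rw [show (2 : ℝ) * n + ν = (n + ν / 2) * 2 by ring, ← div_div]; ring
  have h4 := h3.mul h2
  rw [inv_one, mul_one, pow_mul] at h4
  norm_num at h4
  norm_num
  refine h4.congr' ?_
  filter_upwards [eventually_ge_atTop (m + 1)] with n hn
  rw [aux_F_eq ν n m (by omega)]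
  have h2 : (0 : ℝ) < ((2 * n + ν).descFactorial (2 * m) : ℝ) := by
    exact_mod_cast Nat.descFactorial_pos.2 (by omega)
  have : (0 : ℝ) < 2 * n + ν := by
    have : (0 : ℝ) < n := by exact_mod_cast (by omega : 0 < n)
    positivity

  push_cast
  rw [div_pow]
  field_simp

theorem aux_U (ν : ℕ) (x : ℕ → ℝ) (L : ℝ) (hx : Tendsto x atTop (𝓝 L)) (Q K : ℝ) (hQ : 0 < Q)
    (hK : 0 ≤ K)
    (w : ℕ → ℕ → ℝ) (τ : ℕ → ℝ)
    (hw : ∀ n m, m ≤ n → |w n m| ≤ K ^ m * (n : ℝ) ^ (2 * m) / m.factorial)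
    (hτ : ∀ m, Tendsto (fun n : ℕ => w n m / (n : ℝ) ^ (2 * m)) atTop (𝓝 (τ m))) :
    Tendsto (fun n : ℕ => ∑ m ∈ Finset.range (n + 1), w n m * Q ^ m *
      (((2 * (n - m) + ν).factorial : ℝ) / ((2 * n + ν).factorial : ℝ)) * x (n - m)) atTop
      (𝓝 (L * ∑' m, (Q / 4) ^ m * τ m)) := by
  obtain ⟨B, hB⟩ : ∃ B, ∀ n, |x n| ≤ B := by
    obtain ⟨B, hB⟩ := (Metric.isBounded_range_of_tendsto x hx).exists_norm_le
    exact ⟨B, fun n => hB _ ⟨n, rfl⟩⟩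
  have hB0 : 0 ≤ B := (abs_nonneg _).trans (hB 0)
  have key : Tendsto (fun n : ℕ => ∑' m, (if m ≤ n then w n m * Q ^ m *
      (((2 * (n - m) + ν).factorial : ℝ) / ((2 * n + ν).factorial : ℝ)) * x (n - m) else 0)) atTop
      (𝓝 (∑' m, L * ((Q / 4) ^ m * τ m))) := by
    refine tendsto_tsum_of_dominated_convergence
      (bound := fun m => B * ((K * Q * Real.exp 2) ^ m / m.factorial)) ?_ ?_ ?_
    · exact (Real.summable_pow_div_factorial _).mul_left _
    · intro m
      have h1 := (hτ m).mul (aux_F_lim ν m)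
      have h2 : Tendsto (fun n => x (n - m)) atTop (𝓝 L) := hx.comp (tendsto_sub_atTop_nat m)
      have h3 := (h1.mul h2).const_mul (Q ^ m)
      rw [show L * ((Q / 4) ^ m * τ m) = Q ^ m * (τ m * (1 / 4) ^ m * L) by
        rw [div_pow, div_pow]; ring]
      refine h3.congr' ?_
      filter_upwards [eventually_ge_atTop (m + 1)] with n hn
      rw [if_pos (by omega)]
      have : (0 : ℝ) < n := by exact_mod_cast (by omega : 0 < n)
      field_simp
    · refine Eventually.of_forall fun n m => ?_
      split_ifs with h
      · have hF := aux_F_bound ν n m h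
        have hF0 : 0 ≤ ((2 * (n - m) + ν).factorial : ℝ) / ((2 * n + ν).factorial : ℝ) := by
          positivity
        rw [Real.norm_eq_abs, abs_mul, abs_mul, abs_mul, abs_of_nonneg hF0,
          abs_of_nonneg (pow_nonneg hQ.le m)]
        calc _ ≤ (K ^ m * (n : ℝ) ^ (2 * m) / m.factorial) * Q ^ m *
              (((2 * (n - m) + ν).factorial : ℝ) / ((2 * n + ν).factorial : ℝ)) * B := by
              gcongr
              · exact hw n m h
              · exact hB _
          _ = B * ((K * Q) ^ m / m.factorial) * ((n : ℝ) ^ (2 * m) *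
              (((2 * (n - m) + ν).factorial : ℝ) / ((2 * n + ν).factorial : ℝ))) := by
              rw [mul_pow]; ring
          _ ≤ B * ((K * Q) ^ m / m.factorial) * (Real.exp 2) ^ m := by gcongr
          _ = _ := by rw [mul_pow (K * Q)]; ring
      · rw [norm_zero]; positivity
  rw [tsum_mul_left] at key
  refine key.congr fun n => ?_
  rw [tsum_eq_sum (s := Finset.range (n + 1))]
  · exact Finset.sum_congr rfl fun m hm => if_pos (by have := Finset.mem_range.1 hm; omega)
  · intro m hm
    exact if_neg (by simpa using hm)

theorem stirling1_succ_succ (n j : ℕ) :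
    stirling1 (n + 1) (j + 1) = stirling1 n j + n * stirling1 n (j + 1) := by
  unfold stirling1
  rw [Finset.prod_range_succ, mul_add, Polynomial.coeff_add, Polynomial.coeff_mul_X,
    Polynomial.coeff_mul_C]
  ring

theorem stirling1_succ_zero (n : ℕ) : stirling1 (n + 1) 0 = n * stirling1 n 0 := by
  unfold stirling1
  rw [Finset.prod_range_succ, mul_add, Polynomial.coeff_add, Polynomial.coeff_mul_X_zero,
    Polynomial.coeff_mul_C]
  ring

theorem stirling1_succ_zero' (n : ℕ) : stirling1 (n + 1) 0 = 0 := by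
  induction n with
  | zero => rw [stirling1_succ_zero]; simp
  | succ n ih => rw [stirling1_succ_zero, ih, mul_zero]

theorem stirling1_gt (n j : ℕ) (h : n < j) : stirling1 n j = 0 := by
  induction n generalizing j with
  | zero =>
    unfold stirling1
    simp only [Finset.range_zero, Finset.prod_empty, Polynomial.coeff_one]
    rw [if_neg (by omega)]
  | succ n ih =>
    obtain ⟨j, rfl⟩ : ∃ i, j = i + 1 := ⟨j - 1, by omega⟩
    rw [stirling1_succ_succ, ih _ (by omega), ih _ (by omega)]; simp

theorem stirling1_self (n : ℕ) : stirling1 n n = 1 := by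
  induction n with
  | zero => simp [stirling1]
  | succ n ih => rw [stirling1_succ_succ, ih, stirling1_gt n (n + 1) (by omega)]; simp

theorem aux_bern (k : ℕ) (z : ℝ) (hz : 0 ≤ z) :
    z ^ (k + 1) + (k + 1) * z ^ k ≤ (z + 1) ^ (k + 1) ∧
    (z + 1) ^ (k + 1) ≤ z ^ (k + 1) + (k + 1) * (z + 1) ^ k := by
  induction k with
  | zero => constructor <;> simp
  | succ k ih =>
    obtain ⟨h1, h2⟩ := ih
    have h0 : z ^ k ≤ (z + 1) ^ k := by gcongr; linarith
    have h3 : 0 ≤ z ^ k := by positivity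
    have h4 : z ^ (k + 1) ≤ (z + 1) ^ (k + 1) := by gcongr; linarith
    constructor
    · have := mul_le_mul_of_nonneg_right h1 (by linarith : 0 ≤ z + 1)
      rw [← pow_succ] at this
      refine le_trans ?_ this
      have : (z ^ (k + 1) + (k + 1) * z ^ k) * (z + 1) =
        z ^ (k + 1 + 1) + (k + 1 + 1) * z ^ (k + 1) + (k + 1) * z ^ k := by ring
      rw [this]; push_cast
      have : (0 : ℝ) ≤ (k + 1) * z ^ k := by positivity
      linarith
    · have := mul_le_mul_of_nonneg_right h2 (by linarith : 0 ≤ z + 1)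
      rw [← pow_succ] at this
      refine this.trans ?_
      have : (z ^ (k + 1) + (k + 1) * (z + 1) ^ k) * (z + 1) =
        z ^ (k + 1 + 1) + z ^ (k + 1) + (k + 1) * (z + 1) ^ (k + 1) := by ring
      rw [this]; push_cast
      linarith

theorem aux_st_bounds (n m : ℕ) (h : m ≤ n) :
    ((n : ℝ) - m) ^ (2 * m) / (2 ^ m * m.factorial) ≤ stirling1 n (n - m) ∧
    stirling1 n (n - m) ≤ (n : ℝ) ^ (2 * m) / (2 ^ m * m.factorial) := by
  induction n generalizing m with
  | zero =>
    obtain rfl : m = 0 := by omega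
    simp [stirling1]
  | succ n ih =>
    cases m with
    | zero => simp [stirling1_self]
    | succ m =>
      have hfac : ((m + 1).factorial : ℝ) = (m + 1) * m.factorial := by
        rw [Nat.factorial_succ]; push_cast; ring
      have hP : (0 : ℝ) < 2 ^ m * m.factorial := by positivity
      rcases Nat.lt_or_ge m n with hmn | hmn
      · obtain ⟨d, rfl⟩ : ∃ d, n = m + 1 + d := ⟨n - (m + 1), by omega⟩
        obtain ⟨l1, u1⟩ := ih (m + 1) (by omega)
        obtain ⟨l2, u2⟩ := ih m (by omega)
        rw [show m + 1 + d - (m + 1) = d by omega] at l1 u1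
        rw [show m + 1 + d - m = d + 1 by omega] at l2 u2
        rw [show m + 1 + d + 1 - (m + 1) = d + 1 by omega, stirling1_succ_succ]
        have hn0 : (0 : ℝ) ≤ ((m + 1 + d : ℕ) : ℝ) := by positivity
        constructor
        · refine le_trans ?_ (add_le_add l1 (mul_le_mul_of_nonneg_left l2 hn0))
          have hb := (aux_bern (2 * m + 1) (d : ℝ) (by positivity)).2
          rw [hfac]
          rw [show (2 : ℝ) ^ (m + 1) * ((m + 1) * m.factorial) =
            (2 * (m + 1)) * (2 ^ m * m.factorial) by ring]
          rw [div_le_iff₀ (by positivity), add_mul, div_mul_cancel₀ _ (by positivity)]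
          rw [show ∀ A B : ℝ, A * (B / (2 ^ m * m.factorial)) *
            ((2 * (m + 1)) * (2 ^ m * m.factorial)) = 2 * (m + 1) * A * B by
              intro A B; field_simp]
          push_cast at hb ⊢
          rw [show ((m : ℝ) + 1 + d + 1 - (m + 1)) = d + 1 by ring,
            show ((m : ℝ) + 1 + d - (m + 1)) = d by ring,
            show ((m : ℝ) + 1 + d - m) = d + 1 by ring]
          have e1 : 2 * (m + 1) = 2 * m + 1 + 1 := by ring
          rw [e1]
          have : (0 : ℝ) ≤ m * (d + 1) ^ (2 * m) * (m + 1) := by positivity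
          have e2 : ((d : ℝ) + 1) ^ (2 * m + 1) = (d + 1) ^ (2 * m) * (d + 1) := by ring
          rw [e2] at hb
          nlinarith
        · refine le_trans (add_le_add u1 (mul_le_mul_of_nonneg_left u2 hn0)) ?_
          have hb := (aux_bern (2 * m + 1) ((m + 1 + d : ℕ) : ℝ) (by positivity)).1
          rw [hfac]
          rw [show (2 : ℝ) ^ (m + 1) * ((m + 1) * m.factorial) =
            (2 * (m + 1)) * (2 ^ m * m.factorial) by ring]
          rw [le_div_iff₀ (by positivity), add_mul, div_mul_cancel₀ _ (by positivity)]
          rw [show ∀ A B : ℝ, A * (B / (2 ^ m * m.factorial)) *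
            ((2 * (m + 1)) * (2 ^ m * m.factorial)) = 2 * (m + 1) * (A * B) by
              intro A B; field_simp]
          push_cast at hb ⊢
          have e1 : 2 * (m + 1) = 2 * m + 1 + 1 := by ring
          rw [e1]
          refine le_trans (le_of_eq ?_) hb
          ring
      · obtain rfl : m = n := by omega
        simp only [Nat.sub_self, sub_self, stirling1_succ_zero']
        constructor
        · rw [zero_pow (by omega)]; simp
        · positivity

theorem aux_st_lim (m : ℕ) :
    Tendsto (fun n : ℕ => stirling1 n (n - m) / (n : ℝ) ^ (2 * m)) atTop
      (𝓝 (1 / (2 ^ m * m.factorial))) := by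
  have h1 : Tendsto (fun n : ℕ => (1 - (m : ℝ) / n) ^ (2 * m) / (2 ^ m * m.factorial)) atTop
      (𝓝 ((1 - 0) ^ (2 * m) / (2 ^ m * m.factorial))) := by
    refine Tendsto.div_const (Tendsto.pow (tendsto_const_nhds.sub ?_) _) _
    exact tendsto_const_div_atTop_nhds_zero_nat _
  rw [sub_zero, one_pow] at h1
  refine tendsto_of_tendsto_of_tendsto_of_le_of_le' h1 tendsto_const_nhds ?_ ?_
  · filter_upwards [eventually_ge_atTop (m + 1)] with n hn
    have hn' : (0 : ℝ) < n := by exact_mod_cast (by omega : 0 < n)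
    rw [le_div_iff₀ (by positivity)]
    refine le_trans (le_of_eq ?_) (aux_st_bounds n m (by omega)).1
    rw [one_sub_div hn'.ne', div_pow]; field_simp
  · filter_upwards [eventually_ge_atTop (m + 1)] with n hn
    have hn' : (0 : ℝ) < n := by exact_mod_cast (by omega : 0 < n)
    rw [div_le_iff₀ (by positivity)]
    refine le_trans (aux_st_bounds n m (by omega)).2 (le_of_eq ?_)
    ring

theorem aux_st_w (n m : ℕ) (h : m ≤ n) :
    |stirling1 n (n - m)| ≤ 1 ^ m * (n : ℝ) ^ (2 * m) / m.factorial := by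
  obtain ⟨h1, h2⟩ := aux_st_bounds n m h
  have : 0 ≤ ((n : ℝ) - m) ^ (2 * m) / (2 ^ m * m.factorial) := by
    rw [pow_mul]; positivity
  rw [abs_of_nonneg (this.trans h1), one_pow, one_mul]
  refine h2.trans ?_
  gcongr
  have : (1 : ℝ) ≤ 2 ^ m := one_le_pow₀ (by norm_num)
  have : (0 : ℝ) < m.factorial := by positivity
  nlinarith

theorem aux_shift (M : ℕ) (h : ℕ → ℝ) (h0 : h M = h 0) :
    ∑ m ∈ Finset.Icc 1 M, h m = ∑ m ∈ Finset.range M, h m := by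
  have e1 : ∑ m ∈ Finset.Icc 1 M, h m = ∑ i ∈ Finset.range M, h (i + 1) := by
    have : Finset.Icc 1 M = Finset.Ico 1 (M + 1) := by ext; simp
    rw [this, Finset.sum_Ico_eq_sum_range]
    simp [add_comm]
  have := Finset.sum_range_succ' h M
  rw [Finset.sum_range_succ] at this
  rw [e1]; linarith

theorem aux_Gsum (M : ℕ) (hM : 2 ≤ M) (f : ℤ → ℝ) (hf : ∀ n : ℤ, f (n + M) = f n)
    (ν : ℕ) (hν : ν = 0 ∨ ν = 1) (n : ℕ) (hn : 1 ≤ n) :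
    HasSum (fun j : ℕ => Gf M f ν j / (j : ℝ) ^ (2 * n + ν + 1))
      (Cf M f ν n * ((-1) ^ ν * Real.sqrt M / ((2 * n + ν).factorial *
        (M / (2 * Real.pi)) ^ (2 * n + ν + 1)))) := by
  have hM0 : (0 : ℝ) < M := by exact_mod_cast (by omega : 0 < M)
  have hfM : f M = f 0 := by simpa using hf 0
  have hx : ∀ m ∈ Finset.Icc 1 M, ((m : ℝ) / M) ∈ Set.Icc (0 : ℝ) 1 := by
    intro m hm
    have := (Finset.mem_Icc.1 hm).2
    have : (m : ℝ) ≤ M := by exact_mod_cast this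
    exact ⟨by positivity, (div_le_one hM0).2 this⟩
  have hev : ∀ (k m : ℕ), (Polynomial.map (algebraMap ℚ ℝ) (Polynomial.bernoulli k)).eval
      ((m : ℝ) / M) = (((Polynomial.bernoulli k).eval ((m : ℚ) / (M : ℚ)) : ℚ) : ℝ) := by
    intro k m
    have := Polynomial.eval_map_algebraMap (Polynomial.bernoulli k) ((m : ℝ) / M)
    have h2 := Polynomial.aeval_algebraMap_apply ℝ ((m : ℚ) / (M : ℚ)) (Polynomial.bernoulli k)
    rw [this]
    simpa using h2
  have hs : Real.sqrt M * Real.sqrt M = M := Real.mul_self_sqrt hM0.le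
  have hs0 : 0 < Real.sqrt M := Real.sqrt_pos.2 hM0
  have hp := Real.pi_pos
  rcases hν with rfl | rfl
  · have h1 := hasSum_sum (s := Finset.Icc 1 M) fun m hm =>
      (hasSum_one_div_nat_pow_mul_sin (k := n) (by omega) (hx m hm)).mul_left (f m)
    have h2 := h1.mul_left (2 / Real.sqrt M)
    convert! h2 using 1
    · funext j
      simp only [Gf, if_true]
      rw [← aux_shift M (fun m : ℕ => f m * Real.sin (2 * Real.pi * m * j / M)), mul_div_assoc,
        Finset.sum_div]
      · congr 1
        refine Finset.sum_congr rfl fun m _ => ?_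
        rw [show 2 * Real.pi * m * j / M = 2 * Real.pi * j * (m / M) by ring]
        try simp only [add_zero]
        ring
      · have : 2 * Real.pi * M * j / M = j * (2 * Real.pi) := by field_simp
        have h3 : Real.sin (j * (2 * Real.pi)) = 0 := by
          simpa using Real.sin_add_nat_mul_two_pi 0 j
        simp [hfM, this, h3]
    · simp only [hev, Cf]
      simp only [mul_left_comm (f _), ← Finset.mul_sum]
      try simp only [add_zero]
      rw [Nat.factorial_succ (2 * n)]
      push_cast
      have : (0 : ℝ) < (2 * n).factorial := by positivity
      rw [pow_succ ((M : ℝ) / (2 * Real.pi)), div_pow]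
      field_simp
      rw [show Real.sqrt M ^ 2 = M by rw [sq, hs]]
      ring
  · have h1 := hasSum_sum (s := Finset.Icc 1 M) fun m hm =>
      (hasSum_one_div_nat_pow_mul_cos (k := n + 1) (by omega) (hx m hm)).mul_left (f m)
    have h2 := h1.mul_left (2 / Real.sqrt M)
    convert! h2 using 1
    · funext j
      simp only [Gf, one_ne_zero, if_false]
      rw [← aux_shift M (fun m : ℕ => f m * Real.cos (2 * Real.pi * m * j / M)), mul_div_assoc,
        Finset.sum_div]
      · congr 1
        refine Finset.sum_congr rfl fun m _ => ?_
        rw [show 2 * Real.pi * m * j / M = 2 * Real.pi * j * (m / M) by ring]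
        try simp only [add_zero]
        ring
      · have : 2 * Real.pi * M * j / M = j * (2 * Real.pi) := by field_simp
        simp [hfM, this, Real.cos_nat_mul_two_pi]
    · simp only [hev, Cf]
      simp only [mul_left_comm (f _), ← Finset.mul_sum]
      try simp only [add_zero]
      rw [show 2 * (n + 1) = 2 * n + 1 + 1 by ring, Nat.factorial_succ (2 * n + 1)]
      push_cast
      have : (0 : ℝ) < (2 * n + 1).factorial := by positivity
      rw [pow_succ ((M : ℝ) / (2 * Real.pi)), div_pow]
      field_simp
      rw [show Real.sqrt M ^ 2 = M by rw [sq, hs]]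
      ring

theorem aux_Gbound (M : ℕ) (f : ℤ → ℝ) (ν : ℕ) :
    ∃ B : ℝ, 0 ≤ B ∧ ∀ j, |Gf M f ν j| ≤ B := by
  refine ⟨(2 / Real.sqrt M) * ∑ m ∈ Finset.range M, |f m|, by positivity, fun j => ?_⟩
  have key : ∀ t : ℕ → ℝ, (∀ m, |t m| ≤ 1) →
      |(2 / Real.sqrt M) * ∑ m ∈ Finset.range M, f m * t m| ≤
      (2 / Real.sqrt M) * ∑ m ∈ Finset.range M, |f m| := by
    intro t ht
    rw [abs_mul, abs_of_nonneg (by positivity : 0 ≤ 2 / Real.sqrt M)]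
    gcongr
    refine (Finset.abs_sum_le_sum_abs _ _).trans (Finset.sum_le_sum fun m _ => ?_)
    rw [abs_mul]
    exact mul_le_of_le_one_right (abs_nonneg _) (ht m)
  unfold Gf
  split_ifs
  · exact key _ fun m => Real.abs_sin_le_one _
  · exact key _ fun m => Real.abs_cos_le_one _

theorem aux_C_lim (M : ℕ) (hM : 2 ≤ M) (f : ℤ → ℝ) (hf : ∀ n : ℤ, f (n + M) = f n)
    (ν : ℕ) (hν : ν = 0 ∨ ν = 1) (kν : ℕ) (hkν : 1 ≤ kν)
    (hmin : ∀ j : ℕ, 1 ≤ j → j < kν → Gf M f ν j = 0) :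
    Tendsto (fun n => Cf M f ν n / ((2 * n + ν).factorial *
        ((M / (2 * Real.pi * kν)) ^ 2) ^ n)) atTop
      (𝓝 ((-1) ^ ν * (M / (2 * Real.pi * kν)) ^ (ν + 1) / Real.sqrt M * Gf M f ν kν)) := by
  have hM0 : (0 : ℝ) < M := by exact_mod_cast (by omega : 0 < M)
  have hk0 : (0 : ℝ) < kν := by exact_mod_cast hkν
  have hs0 : 0 < Real.sqrt M := Real.sqrt_pos.2 hM0
  have hp := Real.pi_pos
  obtain ⟨B, hB0, hB⟩ := aux_Gbound M f ν
  have key : Tendsto (fun n : ℕ => ∑' j : ℕ,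
      Gf M f ν j / (j : ℝ) ^ (2 * n + ν + 1) * (kν : ℝ) ^ (2 * n + ν + 1)) atTop
      (𝓝 (∑' j, if j = kν then Gf M f ν kν else 0)) := by
    refine tendsto_tsum_of_dominated_convergence
      (bound := fun j : ℕ => B * (kν : ℝ) ^ 2 * (1 / (j : ℝ) ^ 2)) ?_ ?_ ?_
    · exact (Real.summable_one_div_nat_pow.2 (by norm_num)).mul_left _
    · intro j
      split_ifs with h
      · subst h
        refine tendsto_const_nhds.congr fun n => ?_
        field_simp
      · rcases Nat.eq_zero_or_pos j with rfl | hj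
        · simp
        rcases Nat.lt_or_ge j kν with h1 | h1
        · simp [hmin j hj h1]
        have hj0 : (0 : ℝ) < j := by exact_mod_cast hj
        have hlt : (kν : ℝ) / j < 1 := by
          rw [div_lt_one hj0]; exact_mod_cast (by omega : kν < j)
        have := (tendsto_pow_atTop_nhds_zero_of_lt_one (by positivity) hlt).comp
          (tendsto_atTop_mono (fun n => by simp only [id]; omega) tendsto_id :
            Tendsto (fun n : ℕ => 2 * n + ν + 1) atTop atTop)
        have := this.const_mul (Gf M f ν j)
        rw [mul_zero] at this
        refine this.congr fun n => ?_
        simp only [Function.comp, div_pow]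
        ring
    · filter_upwards [eventually_ge_atTop 1] with n hn
      intro j
      rcases Nat.eq_zero_or_pos j with rfl | hj
      · simp
      rcases Nat.lt_or_ge j kν with h1 | h1
      · simp [hmin j hj h1]; positivity
      have hj0 : (0 : ℝ) < j := by exact_mod_cast hj
      have hle : (kν : ℝ) / j ≤ 1 := by
        rw [div_le_one hj0]; exact_mod_cast h1
      have h2 : ((kν : ℝ) / j) ^ (2 * n + ν + 1) ≤ ((kν : ℝ) / j) ^ 2 :=
        pow_le_pow_of_le_one (by positivity) hle (by omega)
      rw [div_mul_eq_mul_div, mul_div_assoc, ← div_pow, Real.norm_eq_abs, abs_mul,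
        abs_of_nonneg (by positivity : 0 ≤ ((kν : ℝ) / j) ^ (2 * n + ν + 1))]
      calc _ ≤ B * ((kν : ℝ) / j) ^ 2 := by gcongr; exact hB j
        _ = _ := by rw [div_pow]; ring
  rw [tsum_ite_eq] at key
  have key2 := key.const_mul ((-1) ^ ν * (M / (2 * Real.pi * kν)) ^ (ν + 1) / Real.sqrt M)
  refine key2.congr' ?_
  filter_upwards [eventually_ge_atTop 1] with n hn
  have hh := (aux_Gsum M hM f hf ν hν n hn).mul_right ((kν : ℝ) ^ (2 * n + ν + 1))
  rw [hh.tsum_eq]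
  have hone : ((-1 : ℝ) ^ ν) * (-1) ^ ν = 1 := by rw [← mul_pow]; simp
  have hF : (0 : ℝ) < (2 * n + ν).factorial := by positivity
  have e : ((M : ℝ) / (2 * Real.pi)) ^ (2 * n + ν + 1) =
      (M / (2 * Real.pi * kν)) ^ (ν + 1) * ((M / (2 * Real.pi * kν)) ^ 2) ^ n *
        (kν : ℝ) ^ (2 * n + ν + 1) := by
    rw [← pow_mul, ← pow_add, show ν + 1 + 2 * n = 2 * n + ν + 1 by ring, ← mul_pow]
    congr 1; field_simp
  rw [e]
  have hA : (0 : ℝ) < (M / (2 * Real.pi * kν)) ^ (ν + 1) := by positivity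
  have hA2 : (0 : ℝ) < ((M / (2 * Real.pi * kν)) ^ 2) ^ n := by positivity
  have hA3 : (0 : ℝ) < (kν : ℝ) ^ (2 * n + ν + 1) := by positivity
  generalize ((M : ℝ) / (2 * Real.pi * kν)) ^ (ν + 1) = A at *
  generalize (((M : ℝ) / (2 * Real.pi * kν)) ^ 2) ^ n = A2 at *
  generalize (kν : ℝ) ^ (2 * n + ν + 1) = A3 at *
  calc _ = (((-1 : ℝ) ^ ν) * (-1) ^ ν) * (Cf M f ν n / ((2 * n + ν).factorial * A2)) := by
        field_simp
    _ = _ := by rw [hone, one_mul]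

theorem aux_choose_lim (m : ℕ) :
    Tendsto (fun n : ℕ => (n.choose m : ℝ) / (n : ℝ) ^ m) atTop (𝓝 (1 / m.factorial)) := by
  have h1 := isEquivalent_choose m
  have hz : ∀ᶠ (x : ℕ) in atTop, (x : ℝ) ^ m / m.factorial ≠ 0 :=
      eventually_atTop.mpr ⟨1, fun n hn ↦ div_ne_zero (pow_ne_zero _ (ne_of_gt (mod_cast hn)))
        (by positivity)⟩
  rw [Asymptotics.isEquivalent_iff_tendsto_one hz] at h1
  have h2 := h1.mul_const (1 / (m.factorial : ℝ))
  rw [one_mul] at h2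
  refine h2.congr' ?_
  filter_upwards [eventually_ge_atTop 1] with n hn
  have : (0 : ℝ) < n := by exact_mod_cast hn
  have : (0 : ℝ) < m.factorial := by positivity
  simp only [Pi.div_apply]
  field_simp

theorem aux_desc_lim (m : ℕ) :
    Tendsto (fun n : ℕ => (n.descFactorial m : ℝ) / (n : ℝ) ^ m) atTop (𝓝 1) := by
  have h1 := isEquivalent_descFactorial m
  have hz : ∀ᶠ (x : ℕ) in atTop, (x : ℝ) ^ m ≠ 0 :=
      eventually_atTop.mpr ⟨1, fun n hn ↦ pow_ne_zero _ (ne_of_gt (mod_cast hn))⟩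
  rw [Asymptotics.isEquivalent_iff_tendsto_one hz] at h1
  exact h1

/-- layer one : from `C` to `D` -/
theorem aux_D_lim (M : ℕ) (f : ℤ → ℝ) (ν a b : ℕ) (hb : 1 ≤ b) (R L : ℝ) (hR : 0 < R)
    (h : Tendsto (fun n => Cf M f ν n / ((2 * n + ν).factorial * R ^ n)) atTop (𝓝 L)) :
    Tendsto (fun n => Df M f ν a b n * b ^ n / ((2 * n + ν).factorial * R ^ n)) atTop (𝓝 L) := by
  have hb0 : (0 : ℝ) < b := by exact_mod_cast hb
  have hU := aux_U ν _ L h (1 / R) a (by positivity) (by positivity)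
    (fun n m => (n.choose m : ℝ) * (a : ℝ) ^ m) (fun m => if m = 0 then 1 else 0) ?_ ?_
  · have e : ∑' m : ℕ, (1 / R / 4) ^ m * (if m = 0 then (1 : ℝ) else 0) = 1 := by
      rw [tsum_eq_single 0]
      · simp
      · intro m hm; simp [hm]
    rw [e, mul_one] at hU
    refine hU.congr fun n => ?_
    unfold Df
    rw [← Finset.sum_range_reflect, mul_right_comm, inv_mul_cancel₀ (by positivity), one_mul,
      Finset.sum_div]
    refine Finset.sum_congr rfl fun m hm => ?_
    have hm' : m ≤ n := by have := Finset.mem_range.1 hm; omega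
    have e1 : n + 1 - 1 - m = n - m := by omega
    rw [e1, Nat.choose_symm hm', show n - (n - m) = m by omega]
    have e2 : R ^ n = R ^ (n - m) * R ^ m := by rw [← pow_add]; congr 1; omega
    have e3 : (0 : ℝ) < (2 * (n - m) + ν).factorial := by positivity
    have e4 : (0 : ℝ) < (2 * n + ν).factorial := by positivity
    rw [e2, one_div, inv_pow]
    field_simp
  · intro n m hm
    rw [abs_of_nonneg (by positivity)]
    have h1 := Nat.choose_le_pow_div (α := ℝ) m n
    have h2 : (n : ℝ) ^ m ≤ (n : ℝ) ^ (2 * m) := by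
      rcases Nat.eq_zero_or_pos n with rfl | hn
      · obtain rfl : m = 0 := by omega
        simp
      · exact pow_le_pow_right₀ (by exact_mod_cast hn) (by omega)
    calc _ ≤ ((n : ℝ) ^ m / m.factorial) * (a : ℝ) ^ m := by gcongr
      _ ≤ ((n : ℝ) ^ (2 * m) / m.factorial) * (a : ℝ) ^ m := by gcongr
      _ = _ := by ring
  · intro m
    split_ifs with h0
    · subst h0; simp
    · have h1 := (aux_choose_lim m).mul_const ((a : ℝ) ^ m)
      have h2 : Tendsto (fun n : ℕ => 1 / (n : ℝ) ^ m) atTop (𝓝 0) := by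
        have := (tendsto_one_div_atTop_nhds_zero_nat (𝕜 := ℝ)).pow m
        rw [zero_pow h0] at this
        simpa using this
      have h3 := h1.mul h2
      rw [mul_zero] at h3
      refine h3.congr fun n => ?_
      rw [two_mul, pow_add]
      simp only [div_eq_mul_inv, mul_inv]
      ring

/-- layer two : from `D` to `ξ` -/
theorem aux_xi_lim (M : ℕ) (f : ℤ → ℝ) (ν a b : ℕ) (hb : 1 ≤ b) (R L : ℝ) (hR : 0 < R)
    (h : Tendsto (fun n => Df M f ν a b n * b ^ n / ((2 * n + ν).factorial * R ^ n)) atTop (𝓝 L)) :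
    Tendsto (fun n => xif M f ν a b n * n.factorial * b ^ n / ((2 * n + ν).factorial * R ^ n))
      atTop (𝓝 (L * Real.exp (b / R / 8))) := by
  have hb0 : (0 : ℝ) < b := by exact_mod_cast hb
  have hU := aux_U ν _ L h (b / R) 1 (by positivity) (by positivity)
    (fun n m => stirling1 n (n - m)) (fun m => 1 / (2 ^ m * m.factorial)) aux_st_w aux_st_lim
  have e : ∑' m : ℕ, (b / R / 4) ^ m * (1 / (2 ^ m * (m.factorial : ℝ))) = Real.exp (b / R / 8) := by
    rw [Real.exp_eq_exp_ℝ, NormedSpace.exp_eq_tsum_div]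
    refine tsum_congr fun m => ?_
    rw [show (b : ℝ) / R / 8 = (b / R / 4) / 2 by ring, div_pow (b / R / 4 : ℝ) 2]
    field_simp
  rw [e] at hU
  refine hU.congr' ?_
  filter_upwards [eventually_ge_atTop 1] with n hn
  obtain ⟨n, rfl⟩ : ∃ i, n = i + 1 := ⟨n - 1, by omega⟩
  rw [Finset.sum_range_succ, Nat.sub_self, stirling1_succ_zero', zero_mul, zero_mul, zero_mul,
    add_zero]
  have e0 : (0 : ℝ) < (n + 1).factorial := by positivity
  simp only [xif]
  rw [one_div, mul_right_comm _ _ (((n + 1).factorial : ℝ)), inv_mul_cancel₀ e0.ne', one_mul,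
    Finset.sum_mul, Finset.sum_div]
  refine Finset.sum_congr rfl fun m hm => ?_
  have hm' : m ≤ n := by have := Finset.mem_range.1 hm; omega
  have e2 : R ^ (n + 1) = R ^ (n + 1 - m) * R ^ m := by rw [← pow_add]; congr 1; omega
  have e2' : (b : ℝ) ^ (n + 1) = (b : ℝ) ^ (n + 1 - m) * (b : ℝ) ^ m := by
    rw [← pow_add]; congr 1; omega
  have e3 : (0 : ℝ) < (2 * (n + 1 - m) + ν).factorial := by positivity
  have e4 : (0 : ℝ) < (2 * (n + 1) + ν).factorial := by positivity
  rw [e2, e2', div_pow]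
  field_simp

/-- layer three : from `ξ` to `g` -/
theorem aux_g_lim (x g : ℕ → ℝ) (ν b : ℕ) (hb : 1 ≤ b) (R L : ℝ) (hR : 0 < R)
    (hg : ∀ n : ℕ, 1 ≤ n → g n = ∑ ℓ ∈ Finset.range n,
      (-1) ^ ℓ * ((n - 1).choose ℓ : ℝ) * x (n - ℓ))
    (h : Tendsto (fun n => x n * n.factorial * b ^ n / ((2 * n + ν).factorial * R ^ n))
      atTop (𝓝 L)) :
    Tendsto (fun n => g n * n.factorial * b ^ n / ((2 * n + ν).factorial * R ^ n))
      atTop (𝓝 (L * Real.exp (-(b / R / 4)))) := by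
  have hb0 : (0 : ℝ) < b := by exact_mod_cast hb
  have hU := aux_U ν _ L h (b / R) 1 (by positivity) (by positivity)
    (fun n m => (-1) ^ m * ((n - 1).choose m : ℝ) * (n.descFactorial m : ℝ))
    (fun m => (-1) ^ m / m.factorial) ?_ ?_
  · have e : ∑' m : ℕ, (b / R / 4) ^ m * ((-1) ^ m / (m.factorial : ℝ)) =
        Real.exp (-(b / R / 4)) := by
      rw [Real.exp_eq_exp_ℝ, NormedSpace.exp_eq_tsum_div]
      refine tsum_congr fun m => ?_
      rw [← neg_one_mul (b / R / 4 : ℝ), mul_pow (-1 : ℝ)]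
      generalize (b / R / 4 : ℝ) ^ m = z
      ring
    rw [e] at hU
    refine hU.congr' ?_
    filter_upwards [eventually_ge_atTop 1] with n hn
    rw [Finset.sum_range_succ, Nat.choose_eq_zero_of_lt (by omega : n - 1 < n), hg n hn]
    simp only [Nat.cast_zero, mul_zero, zero_mul, add_zero]
    rw [Finset.sum_mul, Finset.sum_mul, Finset.sum_div]
    refine Finset.sum_congr rfl fun m hm => ?_
    have hm' : m ≤ n := by have := Finset.mem_range.1 hm; omega
    have e2 : R ^ n = R ^ (n - m) * R ^ m := by rw [← pow_add]; congr 1; omega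
    have e2' : (b : ℝ) ^ n = (b : ℝ) ^ (n - m) * (b : ℝ) ^ m := by
      rw [← pow_add]; congr 1; omega
    have e3 : (0 : ℝ) < (2 * (n - m) + ν).factorial := by positivity
    have e4 : (0 : ℝ) < (2 * n + ν).factorial := by positivity
    have e5 : (n.factorial : ℝ) = (n - m).factorial * n.descFactorial m := by
      exact_mod_cast (Nat.factorial_mul_descFactorial hm').symm
    rw [e2, e2', div_pow, e5]
    field_simp
  · intro n m hm
    rw [abs_mul, abs_mul, abs_pow, abs_neg, abs_one, one_pow, one_mul, one_mul, abs_of_nonneg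
      (by positivity), abs_of_nonneg (by positivity)]
    have h1 : ((n - 1).choose m : ℝ) ≤ (n : ℝ) ^ m / m.factorial := by
      refine le_trans ?_ (Nat.choose_le_pow_div (α := ℝ) m n)
      exact_mod_cast Nat.choose_le_choose m (Nat.sub_le n 1)
    have h2 : (n.descFactorial m : ℝ) ≤ (n : ℝ) ^ m := by
      exact_mod_cast Nat.descFactorial_le_pow n m
    calc _ ≤ ((n : ℝ) ^ m / m.factorial) * (n : ℝ) ^ m := by gcongr
      _ = _ := by rw [two_mul, pow_add]; ring
  · intro m
    have h1 := ((aux_choose_lim m).comp (tendsto_sub_atTop_nat 1))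
    have h3 : Tendsto (fun n : ℕ => (((n - 1 : ℕ) : ℝ) / n) ^ m) atTop (𝓝 (1 ^ m)) := by
      refine Tendsto.pow ?_ _
      have h4 : Tendsto (fun n : ℕ => 1 - (1 : ℝ) / n) atTop (𝓝 (1 - 0)) :=
        tendsto_const_nhds.sub (tendsto_const_div_atTop_nhds_zero_nat _)
      rw [sub_zero] at h4
      refine h4.congr' ?_
      filter_upwards [eventually_ge_atTop 1] with n hn
      have : (0 : ℝ) < n := by exact_mod_cast hn
      rw [Nat.cast_sub hn, one_sub_div this.ne', Nat.cast_one]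
    have h5 := ((h1.mul h3).mul (aux_desc_lim m)).const_mul ((-1 : ℝ) ^ m)
    rw [one_pow, mul_one, mul_one, mul_one_div] at h5
    refine h5.congr' ?_
    filter_upwards [eventually_ge_atTop 2] with n hn
    have h6 : (0 : ℝ) < n := by exact_mod_cast (by omega : 0 < n)
    have h7 : (0 : ℝ) < ((n - 1 : ℕ) : ℝ) := by exact_mod_cast (by omega : 0 < n - 1)
    simp only [Function.comp]
    rw [two_mul, pow_add, div_pow]
    field_simp

theorem aux_fact_lim (ν : ℕ) (hν : ν = 0 ∨ ν = 1) :
    Tendsto (fun n : ℕ => ((2 * n + ν).factorial : ℝ) * Real.sqrt Real.pi /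
      (2 ^ (2 * n + ν) * (n.factorial : ℝ) ^ 2 * (n : ℝ) ^ ((ν : ℝ) - 1 / 2))) atTop (𝓝 1) := by
  have h0 : Tendsto (fun n : ℕ => ((2 * n).factorial : ℝ) * Real.sqrt Real.pi * Real.sqrt n /
      (2 ^ (2 * n) * (n.factorial : ℝ) ^ 2)) atTop (𝓝 1) := by
    have hs := Stirling.tendsto_stirlingSeq_sqrt_pi
    have hk : Tendsto (fun n : ℕ => 2 * n) atTop atTop :=
      tendsto_atTop_mono (fun n => by simp only [id]; omega) tendsto_id
    have hp : Real.sqrt Real.pi ≠ 0 := (Real.sqrt_pos.2 Real.pi_pos).ne'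
    have h1 := ((hs.comp hk).div (hs.pow 2) (pow_ne_zero 2 hp)).mul_const (Real.sqrt Real.pi)
    rw [show Real.sqrt Real.pi / Real.sqrt Real.pi ^ 2 * Real.sqrt Real.pi = 1 by
      field_simp] at h1
    refine h1.congr' ?_
    filter_upwards [eventually_ge_atTop 1] with n hn
    have hn0 : (0 : ℝ) < n := by exact_mod_cast hn
    simp only [Function.comp, Stirling.stirlingSeq, Pi.div_apply]
    push_cast
    have e1 : Real.sqrt (2 * (2 * n)) = 2 * Real.sqrt n := by
      rw [show (2 : ℝ) * (2 * n) = 2 ^ 2 * n by ring, Real.sqrt_mul (by positivity),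
        Real.sqrt_sq (by norm_num)]
    have e2 : Real.sqrt (2 * n) ^ 2 = 2 * n := Real.sq_sqrt (by positivity)
    have e3 : Real.sqrt n * Real.sqrt n = n := Real.mul_self_sqrt hn0.le
    have e4 : (2 * (n : ℝ) / Real.exp 1) ^ (2 * n) =
        2 ^ (2 * n) * ((n / Real.exp 1) ^ n) ^ 2 := by
      rw [← pow_mul, mul_comm n 2, ← mul_pow]; congr 1; ring
    rw [e1, e4, div_pow (n.factorial : ℝ), mul_pow (Real.sqrt (2 * n)), e2]
    have hsn : 0 < Real.sqrt n := Real.sqrt_pos.2 hn0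
    have e5 : (0 : ℝ) < (n / Real.exp 1) ^ n := by positivity
    have e6 : (0 : ℝ) < n.factorial := by positivity
    generalize ((n : ℝ) / Real.exp 1) ^ n = A at *
    generalize Real.sqrt n = s at *
    rw [← e3]
    field_simp
  rcases hν with rfl | rfl
  · refine h0.congr' ?_
    filter_upwards [eventually_ge_atTop 1] with n hn
    have hn0 : (0 : ℝ) < n := by exact_mod_cast hn
    have e : (n : ℝ) ^ (((0 : ℕ) : ℝ) - 1 / 2) = (Real.sqrt n)⁻¹ := by
      rw [Real.sqrt_eq_rpow, ← Real.rpow_neg hn0.le]; congr 1; norm_num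
    rw [e]
    simp only [add_zero]
    have hsn : 0 < Real.sqrt n := Real.sqrt_pos.2 hn0
    field_simp
  · have h2 : Tendsto (fun n : ℕ => 1 + (1 / 2 : ℝ) / n) atTop (𝓝 (1 + 0)) :=
      tendsto_const_nhds.add (tendsto_const_div_atTop_nhds_zero_nat _)
    have h3 := h0.mul h2
    rw [add_zero, mul_one] at h3
    refine h3.congr' ?_
    filter_upwards [eventually_ge_atTop 1] with n hn
    have hn0 : (0 : ℝ) < n := by exact_mod_cast hn
    have e : (n : ℝ) ^ (((1 : ℕ) : ℝ) - 1 / 2) = Real.sqrt n := by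
      rw [Real.sqrt_eq_rpow]; congr 1; norm_num
    rw [e, Nat.factorial_succ, pow_succ (2 : ℝ) (2 * n)]
    push_cast
    have hsn : 0 < Real.sqrt n := Real.sqrt_pos.2 hn0
    have e3 : Real.sqrt n ^ 2 = n := Real.sq_sqrt hn0.le
    field_simp
    rw [e3]
    try ring

/-- With `g(n) = ∑_{ℓ=0}^{n−1} (−1)^ℓ C(n−1,ℓ) ξ(n−ℓ)` (the coefficients
of `F_f(1/(1+q))`),
`g(n) ~ (−1)^ν (M/(2πk_ν))^(2n+ν+1) G_f^{(ν)}(k_ν) 2^(2n+ν) n! n^(ν−1/2)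
        e^(−b k_ν² π²/(2M²)) / (b^n √(πM))` as `n → ∞`. -/
theorem gf_asymptotic (M : ℕ) (hM : 2 ≤ M) (f : ℤ → ℝ)
    (hf : ∀ n : ℤ, f (n + M) = f n) (ν : ℕ) (hν : ν = 0 ∨ ν = 1)
    (a b : ℕ) (hb : 1 ≤ b)
    (kν : ℕ) (hkν : 1 ≤ kν) (hG : Gf M f ν kν ≠ 0)
    (hmin : ∀ j : ℕ, 1 ≤ j → j < kν → Gf M f ν j = 0)
    (g : ℕ → ℝ)
    (hg : ∀ n : ℕ, 1 ≤ n → g n = ∑ ℓ ∈ Finset.range n,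
      (-1) ^ ℓ * ((n - 1).choose ℓ : ℝ) * xif M f ν a b (n - ℓ)) :
    Filter.Tendsto
      (fun n : ℕ => g n /
        ((-1) ^ ν * ((M : ℝ) / (2 * Real.pi * kν)) ^ (2 * n + ν + 1) * Gf M f ν kν *
          2 ^ (2 * n + ν) * (n.factorial : ℝ) * (n : ℝ) ^ ((ν : ℝ) - 1 / 2) *
          Real.exp (-((b : ℝ) * (kν : ℝ) ^ 2 * Real.pi ^ 2 / (2 * (M : ℝ) ^ 2))) /
          ((b : ℝ) ^ n * Real.sqrt (Real.pi * M))))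
      Filter.atTop (nhds 1) := by
  have hM0 : (0 : ℝ) < M := by exact_mod_cast (by omega : 0 < M)
  have hk0 : (0 : ℝ) < kν := by exact_mod_cast hkν
  have hb0 : (0 : ℝ) < b := by exact_mod_cast hb
  have hp := Real.pi_pos
  have hR : (0 : ℝ) < ((M : ℝ) / (2 * Real.pi * kν)) ^ 2 := by positivity
  have h1 := aux_C_lim M hM f hf ν hν kν hkν hmin
  have h2 := aux_D_lim M f ν a b hb _ _ hR h1
  have h3 := aux_xi_lim M f ν a b hb _ _ hR h2
  have h4 := aux_g_lim _ g ν b hb _ _ hR hg h3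
  rw [mul_assoc (_ * Gf M f ν kν), ← Real.exp_add] at h4
  have hexp : (b : ℝ) / (M / (2 * Real.pi * kν)) ^ 2 / 8 + -(b / (M / (2 * Real.pi * kν)) ^ 2 / 4)
      = -((b : ℝ) * (kν : ℝ) ^ 2 * Real.pi ^ 2 / (2 * (M : ℝ) ^ 2)) := by
    field_simp; ring
  rw [hexp] at h4
  have hE := Real.exp_pos (-((b : ℝ) * (kν : ℝ) ^ 2 * Real.pi ^ 2 / (2 * (M : ℝ) ^ 2)))
  generalize Real.exp (-((b : ℝ) * (kν : ℝ) ^ 2 * Real.pi ^ 2 / (2 * (M : ℝ) ^ 2))) = E at *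
  have hρ : (0 : ℝ) < (M : ℝ) / (2 * Real.pi * kν) := by positivity
  generalize (M : ℝ) / (2 * Real.pi * kν) = ρ at *
  generalize Gf M f ν kν = G at *
  have hsM : 0 < Real.sqrt M := Real.sqrt_pos.2 hM0
  have hsp : 0 < Real.sqrt Real.pi := Real.sqrt_pos.2 hp
  have hsgn : ((-1 : ℝ) ^ ν) ≠ 0 := pow_ne_zero _ (by norm_num)
  have hL : (-1) ^ ν * ρ ^ (ν + 1) / Real.sqrt M * G * E ≠ 0 := by
    have : ρ ^ (ν + 1) ≠ 0 := by positivity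
    have := hsM.ne'
    have := hE.ne'
    positivity
  have h5 := (h4.div_const ((-1) ^ ν * ρ ^ (ν + 1) / Real.sqrt M * G * E)).mul (aux_fact_lim ν hν)
  rw [div_self hL, one_mul] at h5
  refine h5.congr' ?_
  filter_upwards [eventually_ge_atTop 1] with n hn
  have hn0 : (0 : ℝ) < n := by exact_mod_cast hn
  have hr : (0 : ℝ) < (n : ℝ) ^ ((ν : ℝ) - 1 / 2) := Real.rpow_pos_of_pos hn0 _
  generalize (n : ℝ) ^ ((ν : ℝ) - 1 / 2) = r at *
  rw [Real.sqrt_mul hp.le, show ρ ^ (2 * n + ν + 1) = (ρ ^ 2) ^ n * ρ ^ (ν + 1) by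
    rw [← pow_mul, ← pow_add]; congr 1]
  have e1 : (0 : ℝ) < ρ ^ (ν + 1) := by positivity
  have e2 : (0 : ℝ) < (ρ ^ 2) ^ n := by positivity
  have e3 : (0 : ℝ) < (2 * n + ν).factorial := by positivity
  have e4 : (0 : ℝ) < n.factorial := by positivity
  have e5 : (0 : ℝ) < (2 : ℝ) ^ (2 * n + ν) := by positivity
  generalize ρ ^ (ν + 1) = A1 at *
  generalize (ρ ^ 2) ^ n = A2 at *
  generalize ((2 * n + ν).factorial : ℝ) = A3 at *
  generalize (2 : ℝ) ^ (2 * n + ν) = A5 at *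
  generalize (-1 : ℝ) ^ ν = sg at *
  field_simp
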